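/- Let γ > 0, 1 < α < 2, p > 1, a > 0, b > 0. There exist positive constants K₁ and K₂, depending only on α, γ, p, a, b but not on T, such that: for every T > 0, every f ∈ L¹(0,T), and every w ∈ C¹([0,T]) with w ≢ 0 for which the function t ↦ ₀I_t^{2−α}(w(s) − w'(0)s − w(0)) belongs to AC²([0,T]) and for almost every t ∈ [0,T] one has (₀D_t^α w)(t) + a·w(t) = (₀I_t^γ f)(t) and f(t) ≥ b·|w(t)|^p, the inequality T·w'(0) + w(0) ≤ K₁·T^{α+γ−pγ/(p−1)} + K₂·T^{−(α+γ)/(p−1)} holds. -/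

import Mathlib

open MeasureTheory Filter

/-- Riemann–Liouville fractional integral of order `σ` based at `0`:
`(₀I_t^σ f)(t) = (1/Γ(σ)) ∫₀ᵗ (t−s)^{σ−1} f(s) ds`. -/
noncomputable def rlInt (σ : ℝ) (f : ℝ → ℝ) (t : ℝ) : ℝ :=
  (1 / Real.Gamma σ) * ∫ s in (0:ℝ)..t, (t - s) ^ (σ - 1) * f s

/-- The function whose second derivative is the (left) Caputo derivative of order `α ∈ (1,2]`:
for `α < 2` it is `₀I_t^{2−α}(w(s) − w'(0)·s − w(0))`, and for `α = 2` it is `w` itself. -/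
noncomputable def capKernel (α : ℝ) (w : ℝ → ℝ) : ℝ → ℝ :=
  if α = 2 then w else rlInt (2 - α) (fun s => w s - deriv w 0 * s - w 0)

/-- Left Caputo fractional derivative of order `α ∈ (1,2]`:
`(₀D_t^α w)(t) = (d²/dt²)[ ₀I_t^{2−α}(w(s) − w'(0)s − w(0)) ](t)` (second derivative of `w` when `α = 2`). -/
noncomputable def caputoD (α : ℝ) (w : ℝ → ℝ) : ℝ → ℝ :=
  deriv (deriv (capKernel α w))

/-- `g ∈ AC²([0,T])`: `g` is differentiable on `[0,T]`, its second derivative is integrable,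
and `g'` is the integral of `g''` (i.e. `g'` is absolutely continuous). -/
def AC2On (g : ℝ → ℝ) (T : ℝ) : Prop :=
  (∀ t ∈ Set.Icc (0:ℝ) T, DifferentiableAt ℝ g t) ∧
  IntervalIntegrable (deriv (deriv g)) volume 0 T ∧
  ∀ t ∈ Set.Icc (0:ℝ) T, deriv g t = deriv g 0 + ∫ s in (0:ℝ)..t, deriv (deriv g) s

/-!
The equation is tested against `ψ(t) = T X ^ μ - κ X ^ (μ + 1)`, where `X = T - t` and `μ = m + α`
with `m` large. Fubini and the Beta integral (`integral_rlInt_mul_rpow`) move the fractional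
integrals onto the weight, and the two derivatives of the Caputo operator are moved in the same way,
as integrals of order one; the boundary terms at `0` vanish because `w s - w'(0) s - w(0)` vanishes
to first order (`deriv_rlInt_zero`). For a single power this gives `weak_identity`.

A single power would bound `T w'(0) / (m + 2) + w(0)`. To get the coefficient `1` in front of
`T w'(0)`, the number `κ` is chosen so that the weight `T X ^ m - q X ^ (m + 1)` that multiplies
`w(s) - w'(0) s - w(0)` is orthogonal to `X`: writing
`w'(0) s + w(0) = (T w'(0) + w(0)) - w'(0) X`, only `T w'(0) + w(0)` survives, with a positive factor
times `T ^ (m + 2)`. This `κ` and the induced coefficient `θ` in the weight of `f` are less than `1`,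
so the weight of `f` is at least `(1 - θ) T X ^ (μ + γ)`, and `f ≥ b |w| ^ p` gives a negative term
`-c T |w| ^ p X ^ (μ + γ)`. Young's inequality (`exists_weighted_young`) absorbs the two terms linear
in `w` into it, and the remaining powers of `X` integrate to the two powers of `T` in the bound.
-/

/-! ### Duality for the Riemann–Liouville integral -/

theorem integral_beta {s t a : ℝ} (hs : 0 < s) (ht : 0 < t) (ha : 0 < a) :
    ∫ x in (0:ℝ)..a, x ^ (s - 1) * (a - x) ^ (t - 1) =
      a ^ (s + t - 1) * (Real.Gamma s * Real.Gamma t / Real.Gamma (s + t)) := by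
  have h := Complex.betaIntegral_scaled (s : ℂ) (t : ℂ) ha
  rw [Complex.betaIntegral_eq_Gamma_mul_div _ _ (by simpa) (by simpa), ← Complex.ofReal_add,
    Complex.Gamma_ofReal, Complex.Gamma_ofReal, Complex.Gamma_ofReal] at h
  have h2 : ∫ x in (0:ℝ)..a, (x : ℂ) ^ ((s : ℂ) - 1) * ((a : ℂ) - x) ^ ((t : ℂ) - 1) =
      ∫ x in (0:ℝ)..a, ((x ^ (s - 1) * (a - x) ^ (t - 1) : ℝ) : ℂ) := by
    refine intervalIntegral.integral_congr fun x hx => ?_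
    rw [Set.uIcc_of_le ha.le] at hx
    push_cast
    rw [Complex.ofReal_cpow hx.1, Complex.ofReal_cpow (sub_nonneg.2 hx.2)]
    push_cast
    rfl
  rw [h2, intervalIntegral.integral_ofReal, show ((s + t : ℝ) : ℂ) - 1 = ((s + t - 1 : ℝ) : ℂ) by
    push_cast; ring, ← Complex.ofReal_cpow ha.le] at h
  exact_mod_cast h

theorem integral_beta_shift {σ ν s T : ℝ} (hσ : 0 < σ) (hν : 0 ≤ ν) (hs : s < T) :
    ∫ t in s..T, (t - s) ^ (σ - 1) * (T - t) ^ ν =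
      Real.Gamma σ * (Real.Gamma (ν + 1) / Real.Gamma (ν + σ + 1)) * (T - s) ^ (ν + σ) := by
  have h := integral_beta hσ (by linarith : 0 < ν + 1) (sub_pos.2 hs)
  have h2 := intervalIntegral.integral_comp_sub_right
    (fun x => x ^ (σ - 1) * (T - s - x) ^ (ν + 1 - 1)) s (a := s) (b := T)
  rw [sub_self, h] at h2
  simp only [add_sub_cancel_right, sub_sub_sub_cancel_right] at h2
  rw [h2, show σ + (ν + 1) - 1 = ν + σ by ring, show σ + (ν + 1) = ν + σ + 1 by ring]
  ring

/-- Duality of the fractional integral with the weights `(T - t) ^ ν`: by Fubini the left-sided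
integral acting on `u` becomes a right-sided one acting on the weight, which the Beta integral
evaluates. Only integrability of `u` on `[0, T]` is needed. -/
theorem integral_rlInt_mul_rpow {σ ν T : ℝ} (hσ : 0 < σ) (hν : 0 ≤ ν) (hT : 0 < T) {u : ℝ → ℝ}
    (hu : IntervalIntegrable u volume 0 T) :
    ∫ t in (0:ℝ)..T, rlInt σ u t * (T - t) ^ ν =
      Real.Gamma (ν + 1) / Real.Gamma (ν + σ + 1) *
        ∫ s in (0:ℝ)..T, u s * (T - s) ^ (ν + σ) := by
  have hΓ : Real.Gamma σ ≠ 0 := (Real.Gamma_pos_of_pos hσ).ne'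
  -- Cutting every factor off to `[0, T]` turns the triangle integral into a double integral over the
  -- plane whose integrand is a bounded function times a convolution integrand.
  set H : ℝ → ℝ := (Set.Ioc 0 T).indicator fun x => x ^ (σ - 1) with hH
  set U : ℝ → ℝ := (Set.Ioc 0 T).indicator u with hU
  set K : ℝ → ℝ := (Set.Icc 0 T).indicator fun x => x ^ ν with hK
  have hHi : Integrable H := by
    rw [hH, integrable_indicator_iff measurableSet_Ioc,
      ← intervalIntegrable_iff_integrableOn_Ioc_of_le hT.le]
    exact intervalIntegral.intervalIntegrable_rpow' (by linarith)
  have hUi : Integrable U := by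
    rw [hU, integrable_indicator_iff measurableSet_Ioc,
      ← intervalIntegrable_iff_integrableOn_Ioc_of_le hT.le]
    exact hu
  have hKm : Measurable K := (measurable_id.pow_const ν).indicator measurableSet_Icc
  have hKb : ∀ x, ‖K x‖ ≤ T ^ ν := by
    intro x
    simp only [hK, Set.indicator]
    split_ifs with hx
    · rw [Real.norm_of_nonneg (Real.rpow_nonneg hx.1 _)]
      exact Real.rpow_le_rpow hx.1 hx.2 hν
    · simpa using Real.rpow_nonneg hT.le ν
  have hint : Integrable (Function.uncurry fun t s => U s * H (t - s) * K (T - t))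
      (volume.prod volume) := by
    have h1 : Integrable (fun q : ℝ × ℝ => U q.2 * H (q.1 - q.2)) (volume.prod volume) :=
      hUi.convolution_integrand (ContinuousLinearMap.mul ℝ ℝ) hHi
    refine h1.mul_bdd (c := T ^ ν) ?_ (Eventually.of_forall fun q => hKb _)
    exact (hKm.comp (measurable_const.sub measurable_fst)).aestronglyMeasurable
  have hswap := integral_integral_swap hint
  have hl : ∫ t, ∫ s, U s * H (t - s) * K (T - t) =
      Real.Gamma σ * ∫ t in (0:ℝ)..T, rlInt σ u t * (T - t) ^ ν := by
    rw [← intervalIntegral.integral_const_mul, intervalIntegral.integral_of_le hT.le,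
      ← integral_indicator measurableSet_Ioc]
    congr 1 with t
    rw [integral_mul_const]
    by_cases ht : t ∈ Set.Ioc 0 T
    · have hmem : T - t ∈ Set.Icc 0 T := ⟨by linarith [ht.2], by linarith [ht.1]⟩
      have hKt : K (T - t) = (T - t) ^ ν := Set.indicator_of_mem hmem _
      have hin : ∫ s, U s * H (t - s) = ∫ s in (0:ℝ)..t, (t - s) ^ (σ - 1) * u s := by
        rw [intervalIntegral.integral_of_le ht.1.le, integral_Ioc_eq_integral_Ioo,
          ← integral_indicator measurableSet_Ioo]
        congr 1 with s
        simp only [hU, hH, Set.indicator, Set.mem_Ioc, Set.mem_Ioo]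
        have h1 := ht.1
        have h2 := ht.2
        split_ifs <;> first | ring1 | (exfalso; grind)
      rw [Set.indicator_of_mem ht, hin, hKt, rlInt]
      field_simp
    · rw [Set.indicator_of_notMem ht]
      by_cases ht0 : 0 < t
      · have : K (T - t) = 0 :=
          Set.indicator_of_notMem (fun h => ht ⟨ht0, by linarith [h.1]⟩) _
        rw [this, mul_zero]
      · have : ∀ s, U s * H (t - s) = 0 := by
          intro s
          simp only [hU, hH, Set.indicator, Set.mem_Ioc]
          split_ifs <;> first | ring1 | (exfalso; grind)
        simp [this]
  have hr : ∫ s, ∫ t, U s * H (t - s) * K (T - t) =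
      Real.Gamma σ * (Real.Gamma (ν + 1) / Real.Gamma (ν + σ + 1) *
        ∫ s in (0:ℝ)..T, u s * (T - s) ^ (ν + σ)) := by
    rw [← mul_assoc, ← intervalIntegral.integral_const_mul, intervalIntegral.integral_of_le hT.le,
      integral_Ioc_eq_integral_Ioo, ← integral_indicator measurableSet_Ioo]
    have hne : ∀ᵐ s : ℝ, s ≠ T := by simp [ae_iff]
    refine integral_congr_ae (hne.mono fun s hsT => ?_)
    simp only [mul_assoc]
    rw [integral_const_mul]
    by_cases hs : s ∈ Set.Ioo 0 T
    · have hUs : U s = u s := Set.indicator_of_mem (Set.Ioo_subset_Ioc_self hs) _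
      have hin : ∫ t, H (t - s) * K (T - t) = ∫ t in s..T, (t - s) ^ (σ - 1) * (T - t) ^ ν := by
        rw [intervalIntegral.integral_of_le hs.2.le, ← integral_indicator measurableSet_Ioc]
        congr 1 with t
        simp only [hK, hH, Set.indicator, Set.mem_Ioc, Set.mem_Icc]
        have h1 := hs.1
        have h2 := hs.2
        split_ifs <;> first | ring1 | (exfalso; grind)
      rw [Set.indicator_of_mem hs, hin, hUs, integral_beta_shift hσ hν hs.2]
      ring
    · have hUs : U s = 0 :=
        Set.indicator_of_notMem (fun h => hs ⟨h.1, lt_of_le_of_ne h.2 hsT⟩) _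
      rw [Set.indicator_of_notMem hs, hUs, zero_mul]
  rw [hl, hr] at hswap
  exact mul_left_cancel₀ hΓ hswap

/-! ### The Caputo derivative tested against powers -/

/-- If `u` vanishes to first order at `0`, then `|rlInt σ u t| ≤ C t ^ (σ + 1)` for small `t > 0`.
Only the right-hand difference quotient is examined, so the values of `rlInt` at negative times play
no role; differentiability at `0` has to be assumed. -/
theorem deriv_rlInt_zero {σ : ℝ} (hσ : 0 < σ) {u : ℝ → ℝ} (hu0 : u 0 = 0)
    (hu : HasDerivAt u 0 0) (hd : DifferentiableAt ℝ (rlInt σ u) 0) :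
    deriv (rlInt σ u) 0 = 0 := by
  have hΓ : 0 < Real.Gamma σ := Real.Gamma_pos_of_pos hσ
  have hsmall : ∀ᶠ s in nhds (0:ℝ), |u s| ≤ |s| := by
    have := (hasDerivAt_iff_isLittleO.1 hu).bound (c := 1) one_pos
    simpa [hu0] using this
  obtain ⟨ε, hε, hball⟩ := Metric.eventually_nhds_iff.1 hsmall
  have hbound : ∀ t ∈ Set.Ioo 0 ε, ‖rlInt σ u t / t‖ ≤ 1 / Real.Gamma σ * (t ^ σ / σ) := by
    intro t ht
    have hint : IntervalIntegrable (fun s => (t - s) ^ (σ - 1) * t) volume 0 t := by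
      have h := (intervalIntegral.intervalIntegrable_rpow' (a := 0) (b := t)
        (by linarith : -1 < σ - 1)).comp_sub_left t
      simp only [sub_zero, sub_self] at h
      exact h.symm.mul_const t
    have h1 : ‖∫ s in (0:ℝ)..t, (t - s) ^ (σ - 1) * u s‖ ≤
        ∫ s in (0:ℝ)..t, (t - s) ^ (σ - 1) * t := by
      refine intervalIntegral.norm_integral_le_of_norm_le ht.1.le
        (Eventually.of_forall fun s hs => ?_) hint
      have hus : |u s| ≤ t := by
        have := hball (y := s) (by
          rw [Real.dist_eq, sub_zero, abs_of_pos hs.1]; linarith [hs.2, ht.2])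
        rw [abs_of_pos hs.1] at this
        linarith [hs.2]
      have hnn : 0 ≤ (t - s) ^ (σ - 1) := Real.rpow_nonneg (sub_nonneg.2 hs.2) _
      rw [norm_mul, Real.norm_of_nonneg hnn, Real.norm_eq_abs]
      exact mul_le_mul_of_nonneg_left hus hnn
    have h2 : ∫ s in (0:ℝ)..t, (t - s) ^ (σ - 1) * t = t ^ σ / σ * t := by
      rw [intervalIntegral.integral_mul_const,
        intervalIntegral.integral_comp_sub_left (fun x => x ^ (σ - 1)) t,
        integral_rpow (Or.inl (by linarith))]
      simp [Real.zero_rpow hσ.ne']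
    rw [h2] at h1
    rw [rlInt, norm_div, norm_mul, Real.norm_of_nonneg (by positivity : 0 ≤ 1 / Real.Gamma σ),
      Real.norm_of_nonneg ht.1.le, div_le_iff₀ ht.1, mul_assoc]
    exact mul_le_mul_of_nonneg_left h1 (by positivity)
  have hlim0 : Tendsto (fun t => rlInt σ u t / t) (nhdsWithin 0 (Set.Ioi 0)) (nhds 0) := by
    refine squeeze_zero_norm' (a := fun t => 1 / Real.Gamma σ * (t ^ σ / σ)) ?_ ?_
    · filter_upwards [Ioo_mem_nhdsGT hε] with t ht using hbound t ht
    · have hc : ContinuousAt (fun t : ℝ => 1 / Real.Gamma σ * (t ^ σ / σ)) 0 :=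
        continuousAt_const.mul
          ((Real.continuousAt_rpow_const 0 σ (Or.inr hσ.le)).div_const σ)
      have := hc.tendsto.mono_left (nhdsWithin_le_nhds (s := Set.Ioi 0))
      simpa [Real.zero_rpow hσ.ne'] using this
  have hlim : Tendsto (fun t => rlInt σ u t / t) (nhdsWithin 0 (Set.Ioi 0))
      (nhds (deriv (rlInt σ u) 0)) := by
    have h := hd.hasDerivAt.tendsto_slope_zero_right
    have h0 : rlInt σ u 0 = 0 := by simp [rlInt]
    simpa [h0, div_eq_inv_mul] using h
  exact tendsto_nhds_unique hlim hlim0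

theorem rlInt_one (u : ℝ → ℝ) (t : ℝ) : rlInt 1 u t = ∫ s in (0:ℝ)..t, u s := by
  simp [rlInt]

/-- Two integrations by parts against `(T - t) ^ (ν + 2)`. Since `g' = rlInt 1 g''` and
`g = rlInt 1 g'` on `[0, T]`, this is the duality formula of order `1` applied twice. -/
theorem integral_deriv_deriv_mul_rpow {g : ℝ → ℝ} {T ν : ℝ} (hT : 0 < T) (hν : 0 ≤ ν)
    (hg : AC2On g T) (hg0 : g 0 = 0) (hdg0 : deriv g 0 = 0) :
    ∫ t in (0:ℝ)..T, deriv (deriv g) t * (T - t) ^ (ν + 2) =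
      (ν + 1) * (ν + 2) * ∫ t in (0:ℝ)..T, g t * (T - t) ^ ν := by
  obtain ⟨hd, hi, hftc⟩ := hg
  have h1 : ∀ t ∈ Set.Icc 0 T, deriv g t = rlInt 1 (deriv (deriv g)) t := by
    intro t ht
    rw [hftc t ht, hdg0, zero_add, rlInt_one]
  have hgi : IntervalIntegrable (deriv g) volume 0 T := by
    refine ContinuousOn.intervalIntegrable ?_
    rw [Set.uIcc_of_le hT.le]
    have hc := intervalIntegral.continuousOn_primitive_interval' hi Set.left_mem_uIcc
    rw [Set.uIcc_of_le hT.le] at hc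
    refine hc.congr fun t ht => ?_
    rw [h1 t ht, rlInt_one]
  have h0 : ∀ t ∈ Set.Icc 0 T, g t = rlInt 1 (deriv g) t := by
    intro t ht
    rw [rlInt_one, intervalIntegral.integral_eq_sub_of_hasDerivAt (f := g), hg0, sub_zero]
    · intro x hx
      rw [Set.uIcc_of_le ht.1] at hx
      exact (hd x ⟨hx.1, hx.2.trans ht.2⟩).hasDerivAt
    · refine hgi.mono_set ?_
      rw [Set.uIcc_of_le ht.1, Set.uIcc_of_le hT.le]
      exact Set.Icc_subset_Icc_right ht.2
  have e0 := integral_rlInt_mul_rpow one_pos hν hT hgi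
  have e1 := integral_rlInt_mul_rpow one_pos (by linarith : 0 ≤ ν + 1) hT hi
  have c0 : ∫ t in (0:ℝ)..T, g t * (T - t) ^ ν =
      ∫ t in (0:ℝ)..T, rlInt 1 (deriv g) t * (T - t) ^ ν := by
    refine intervalIntegral.integral_congr fun t ht => ?_
    rw [Set.uIcc_of_le hT.le] at ht
    simp only [h0 t ht]
  have c1 : ∫ t in (0:ℝ)..T, deriv g t * (T - t) ^ (ν + 1) =
      ∫ t in (0:ℝ)..T, rlInt 1 (deriv (deriv g)) t * (T - t) ^ (ν + 1) := by
    refine intervalIntegral.integral_congr fun t ht => ?_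
    rw [Set.uIcc_of_le hT.le] at ht
    simp only [h1 t ht]
  have hG0 : Real.Gamma (ν + 1) ≠ 0 := (Real.Gamma_pos_of_pos (by linarith)).ne'
  rw [c0, e0, c1, e1, Real.Gamma_add_one (s := ν + 1 + 1) (by linarith),
    Real.Gamma_add_one (s := ν + 1) (by linarith), show ν + 1 + 1 = ν + 2 by ring]
  have : ν + 1 ≠ 0 := by linarith
  have : ν + 2 ≠ 0 := by linarith
  field_simp

/-- The Caputo derivative tested against `(T - t) ^ μ`: both derivatives and the fractional integral
are moved onto the weight. -/
theorem integral_caputoD_mul_rpow {α μ T : ℝ} (hα2 : α < 2) (hμ : 2 ≤ μ)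
    (hT : 0 < T) {w : ℝ → ℝ} (hw : ContDiff ℝ 1 w) (hAC : AC2On (capKernel α w) T) :
    ∫ t in (0:ℝ)..T, caputoD α w t * (T - t) ^ μ =
      Real.Gamma (μ + 1) / Real.Gamma (μ - α + 1) *
        ∫ s in (0:ℝ)..T, (w s - deriv w 0 * s - w 0) * (T - s) ^ (μ - α) := by
  have hcap : capKernel α w = rlInt (2 - α) fun s => w s - deriv w 0 * s - w 0 := by
    rw [capKernel, if_neg hα2.ne]
  have hσ : 0 < 2 - α := by linarith
  have hg0 : capKernel α w 0 = 0 := by simp [hcap, rlInt]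
  have hdg0 : deriv (capKernel α w) 0 = 0 := by
    have hd := hAC.1 0 ⟨le_rfl, hT.le⟩
    rw [hcap] at hd ⊢
    refine deriv_rlInt_zero hσ (by simp) ?_ hd
    have hw' : HasDerivAt w (deriv w 0) 0 :=
      (hw.differentiable (by simp)).differentiableAt.hasDerivAt
    simpa using (hw'.sub ((hasDerivAt_id (0:ℝ)).const_mul (deriv w 0))).sub_const (w 0)
  have h1 := integral_deriv_deriv_mul_rpow (ν := μ - 2) hT (by linarith) hAC hg0 hdg0
  have hcu : Continuous fun s => w s - deriv w 0 * s - w 0 := by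
    have := hw.continuous
    fun_prop
  have h2 := integral_rlInt_mul_rpow (ν := μ - 2) hσ (by linarith) hT
    (hcu.intervalIntegrable 0 T)
  rw [← hcap] at h2
  rw [h2, sub_add_cancel, show μ - 2 + (2 - α) = μ - α by ring] at h1
  rw [caputoD, h1, Real.Gamma_add_one (s := μ) (by linarith),
    show Real.Gamma μ = (μ - 1) * Real.Gamma (μ - 2 + 1) by
      rw [show μ - 2 + 1 = μ - 1 by ring, ← Real.Gamma_add_one (by linarith), sub_add_cancel]]
  ring

/-! ### The tested equation -/

theorem continuous_sub_rpow (T : ℝ) {r : ℝ} (hr : 0 ≤ r) : Continuous fun s : ℝ => (T - s) ^ r :=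
  (continuous_const.sub continuous_id).rpow_const fun _ => Or.inr hr

theorem integral_sub_rpow {T r : ℝ} (hr : 0 ≤ r) :
    ∫ s in (0:ℝ)..T, (T - s) ^ r = T ^ (r + 1) / (r + 1) := by
  rw [intervalIntegral.integral_comp_sub_left (fun x => x ^ r) T,
    integral_rpow (Or.inl (by linarith))]
  simp [Real.zero_rpow (by linarith : r + 1 ≠ 0)]

theorem integral_taylor_remainder_mul_rpow {w : ℝ → ℝ} (hw : Continuous w) (c d : ℝ) {T m : ℝ}
    (hT : 0 < T) (hm : 0 ≤ m) :
    ∫ s in (0:ℝ)..T, (w s - c * s - d) * (T - s) ^ m =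
      (∫ s in (0:ℝ)..T, w s * (T - s) ^ m) - (T * c + d) * (T ^ (m + 1) / (m + 1))
        + c * (T ^ (m + 2) / (m + 2)) := by
  have k0 := continuous_sub_rpow T hm
  have k1 := continuous_sub_rpow T (by linarith : 0 ≤ m + 1)
  have hsplit : ∫ s in (0:ℝ)..T, (w s - c * s - d) * (T - s) ^ m =
      ∫ s in (0:ℝ)..T, (w s * (T - s) ^ m - (T * c + d) * (T - s) ^ m + c * (T - s) ^ (m + 1)) := by
    refine intervalIntegral.integral_congr fun s hs => ?_
    rw [Set.uIcc_of_le hT.le] at hs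
    simp only [Real.rpow_add_one' (sub_nonneg.2 hs.2) (by linarith : m + 1 ≠ 0)]
    ring
  rw [hsplit, intervalIntegral.integral_add, intervalIntegral.integral_sub,
    intervalIntegral.integral_const_mul, intervalIntegral.integral_const_mul,
    integral_sub_rpow hm, integral_sub_rpow (by linarith : 0 ≤ m + 1),
    show m + 1 + 1 = m + 2 by ring]
  all_goals exact Continuous.intervalIntegrable (by fun_prop) _ _

/-- The equation tested against `(T - t) ^ (m + α)`, with the contribution of the initial data
evaluated explicitly. -/
theorem weak_identity {γ α a m T : ℝ} (hγ : 0 < γ) (hα1 : 1 < α) (hα2 : α < 2) (hm : 1 ≤ m)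
    (hT : 0 < T) {f w : ℝ → ℝ} (hf : IntervalIntegrable f volume 0 T) (hw : ContDiff ℝ 1 w)
    (hAC : AC2On (capKernel α w) T)
    (heq : ∀ᵐ t ∂(volume.restrict (Set.Icc (0:ℝ) T)), caputoD α w t + a * w t = rlInt γ f t) :
    Real.Gamma (m + α + 1) / Real.Gamma (m + 1) *
        ((∫ s in (0:ℝ)..T, w s * (T - s) ^ m)
          - (T * deriv w 0 + w 0) * (T ^ (m + 1) / (m + 1))
          + deriv w 0 * (T ^ (m + 2) / (m + 2)))
      + a * ∫ s in (0:ℝ)..T, w s * (T - s) ^ (m + α)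
      = Real.Gamma (m + α + 1) / Real.Gamma (m + α + γ + 1) *
        ∫ s in (0:ℝ)..T, f s * (T - s) ^ (m + α + γ) := by
  have hμ : 2 ≤ m + α := by linarith
  have h1 := integral_caputoD_mul_rpow hα2 hμ hT hw hAC
  rw [add_sub_cancel_right, integral_taylor_remainder_mul_rpow hw.continuous _ _ hT
    (by linarith)] at h1
  rw [← h1, ← integral_rlInt_mul_rpow hγ (by linarith) hT hf,
    ← intervalIntegral.integral_const_mul, ← intervalIntegral.integral_add]
  · refine intervalIntegral.integral_congr_ae ?_
    rw [ae_restrict_iff' measurableSet_Icc] at heq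
    filter_upwards [heq] with t ht htm
    rw [Set.uIoc_of_le hT.le] at htm
    rw [← ht (Set.Ioc_subset_Icc_self htm)]
    ring
  · exact hAC.2.1.mul_continuousOn (continuous_sub_rpow T (by linarith)).continuousOn
  · have := hw.continuous
    have := continuous_sub_rpow T (by linarith : 0 ≤ m + α)
    exact Continuous.intervalIntegrable (by fun_prop) _ _

/-! ### Young's inequality with weights -/

theorem exists_mul_le_rpow_add {p A β : ℝ} (hp : 1 < p) (hA : 0 < A) (hβ : 0 < β) :
    ∃ C > 0, ∀ z, 0 ≤ z → A * z ≤ β * z ^ p + C := by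
  have hp' : 0 < p - 1 := by linarith
  set M := (A / β) ^ (p - 1)⁻¹ with hM
  have hMpos : 0 < M := by positivity
  refine ⟨A * M, by positivity, fun z hz => ?_⟩
  rcases le_total z M with h | h
  · have : 0 ≤ β * z ^ p := by positivity
    nlinarith
  · have h1 : A / β ≤ z ^ (p - 1) := by
      have := Real.rpow_le_rpow hMpos.le h hp'.le
      rwa [hM, Real.rpow_inv_rpow (by positivity) hp'.ne'] at this
    have h2 : z ^ p = z ^ (p - 1) * z := by
      rw [← Real.rpow_add_one (by linarith : z ≠ 0), sub_add_cancel]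
    rw [div_le_iff₀ hβ] at h1
    have h3 : 0 < A * M := by positivity
    rw [h2]
    nlinarith

/-- Young's inequality with weights; the constant does not depend on the exponents `r`, `d` of the
weights. It follows from the unweighted one at `y * X ^ (d / (p - 1))`. -/
theorem exists_weighted_young {p A β : ℝ} (hp : 1 < p) (hA : 0 < A) (hβ : 0 < β) :
    ∃ C > 0, ∀ r d y X : ℝ, 0 ≤ y → 0 < X →
      A * (y * X ^ r) ≤ β * (y ^ p * X ^ (r + d)) + C * X ^ (r - d / (p - 1)) := by
  obtain ⟨C, hC, h⟩ := exists_mul_le_rpow_add hp hA hβ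
  refine ⟨C, hC, fun r d y X hy hX => ?_⟩
  have hp' : p - 1 ≠ 0 := by linarith
  have h1 := mul_le_mul_of_nonneg_right (h (y * X ^ (d / (p - 1))) (by positivity))
    (Real.rpow_nonneg hX.le (r - d / (p - 1)))
  have e1 : X ^ (d / (p - 1)) * X ^ (r - d / (p - 1)) = X ^ r := by
    rw [← Real.rpow_add hX]; congr 1; ring
  have e2 : (X ^ (d / (p - 1))) ^ p * X ^ (r - d / (p - 1)) = X ^ (r + d) := by
    rw [← Real.rpow_mul hX.le, ← Real.rpow_add hX]; congr 1; field_simp; ring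
  rw [Real.mul_rpow hy (by positivity)] at h1
  calc A * (y * X ^ r) = A * (y * X ^ (d / (p - 1))) * X ^ (r - d / (p - 1)) := by
        rw [← e1]; ring
    _ ≤ _ := h1
    _ = _ := by rw [← e2]; ring

theorem mul_weight_le {Q T X k y r : ℝ} (hX : 0 < X) (hk : |T - k * X| ≤ Q * T) :
    y * (T * X ^ r - k * X ^ (r + 1)) ≤ T * (Q * (|y| * X ^ r)) := by
  rw [Real.rpow_add_one hX.ne']
  have hXr : 0 ≤ X ^ r := Real.rpow_nonneg hX.le r
  calc y * (T * X ^ r - k * (X ^ r * X)) = y * (T - k * X) * X ^ r := by ring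
    _ ≤ |y * (T - k * X)| * X ^ r := mul_le_mul_of_nonneg_right (le_abs_self _) hXr
    _ = |y| * |T - k * X| * X ^ r := by rw [abs_mul]
    _ ≤ |y| * (Q * T) * X ^ r := by gcongr
    _ = _ := by ring

/-! ### The a priori bound -/

set_option maxHeartbeats 1000000 in
/-- Lemma 2.3 (i): a priori bound `T·w'(0) + w(0) ≤ K₁ T^{α+γ−pγ/(p−1)} + K₂ T^{−(α+γ)/(p−1)}`
for solutions of `₀D_t^α w + a w = ₀I_t^γ f`, `f ≥ b|w|^p`, with `K₁, K₂` independent of `T`. -/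
theorem apriori_bound_eq
    (γ α p a b : ℝ) (hγ : 0 < γ) (hα1 : 1 < α) (hα2 : α < 2)
    (hp : 1 < p) (ha : 0 < a) (hb : 0 < b) :
    ∃ K₁ > (0:ℝ), ∃ K₂ > (0:ℝ), ∀ T > (0:ℝ), ∀ f w : ℝ → ℝ,
      IntervalIntegrable f volume 0 T →
      ContDiff ℝ 1 w →
      (∃ t ∈ Set.Icc (0:ℝ) T, w t ≠ 0) →
      AC2On (capKernel α w) T →
      (∀ᵐ t ∂(volume.restrict (Set.Icc (0:ℝ) T)),
        caputoD α w t + a * w t = rlInt γ f t ∧ f t ≥ b * |w t| ^ p) →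
      T * deriv w 0 + w 0
        ≤ K₁ * T ^ (α + γ - p * γ / (p - 1)) + K₂ * T ^ (-(α + γ) / (p - 1)) := by
  have hp' : 0 < p - 1 := by linarith
  -- `m > e₁ ≥ e₂` makes all the exponents of `T - s` below nonnegative.
  obtain ⟨e₁, he₁⟩ : ∃ e, e = (α + γ) / (p - 1) := ⟨_, rfl⟩
  obtain ⟨e₂, he₂⟩ : ∃ e, e = γ / (p - 1) := ⟨_, rfl⟩
  have he₁0 : 0 < e₁ := by rw [he₁]; positivity
  have he₂₁ : e₂ ≤ e₁ := by rw [he₁, he₂]; gcongr; linarith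
  obtain ⟨m, hm⟩ : ∃ m, m = 1 + e₁ := ⟨_, rfl⟩
  have hm1 : 1 ≤ m := by linarith
  obtain ⟨c₁, hc₁⟩ : ∃ c, c = Real.Gamma (m + α + 1) / Real.Gamma (m + 1) := ⟨_, rfl⟩
  obtain ⟨c₀, hc₀⟩ : ∃ c, c = Real.Gamma (m + α + 1) / Real.Gamma (m + α + γ + 1) := ⟨_, rfl⟩
  have hG1 : 0 < Real.Gamma (m + α + 1) := Real.Gamma_pos_of_pos (by linarith)
  have hG2 : 0 < Real.Gamma (m + 1) := Real.Gamma_pos_of_pos (by linarith)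
  have hG3 : 0 < Real.Gamma (m + α + γ + 1) := Real.Gamma_pos_of_pos (by linarith)
  have hc₁0 : 0 < c₁ := by rw [hc₁]; positivity
  have hc₀0 : 0 < c₀ := by rw [hc₀]; positivity
  -- `κ` is the coefficient in the test function; `q` and `θ` are the coefficients it induces in the
  -- weights multiplying `w` (from the Caputo term) and `f`. With `q = (m + 3) / (m + 2)` the weight
  -- `T X ^ m - q X ^ (m + 1)` has vanishing first moment about `X = 0`.
  obtain ⟨q, hq⟩ : ∃ q, q = (m + 3) / (m + 2) := ⟨_, rfl⟩
  obtain ⟨κ, hκ⟩ : ∃ κ, κ = (m + 1) * (m + 3) / ((m + 2) * (m + α + 1)) := ⟨_, rfl⟩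
  obtain ⟨θ, hθ⟩ : ∃ θ, θ = (m + 1) * (m + 3) / ((m + 2) * (m + α + γ + 1)) := ⟨_, rfl⟩
  have hq1 : 1 ≤ q := by rw [hq, le_div_iff₀ (by linarith)]; linarith
  have hκ0 : 0 < κ := by rw [hκ]; positivity
  have hκ1 : κ ≤ 1 := by
    rw [hκ, div_le_one (by positivity)]; nlinarith
  have hθ0 : 0 < θ := by rw [hθ]; positivity
  have hθ1 : θ < 1 := by
    rw [hθ, div_lt_one (by positivity)]; nlinarith
  have hβ : 0 < c₀ * b * (1 - θ) / 2 := by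
    have : 0 < 1 - θ := by linarith
    positivity
  obtain ⟨C₁, hC₁, hY₁⟩ := exists_weighted_young hp (by positivity : 0 < c₁ * q) hβ
  obtain ⟨C₂, hC₂, hY₂⟩ := exists_weighted_young hp ha hβ
  obtain ⟨N, hN⟩ : ∃ N, N = c₁ / ((m + 1) * (m + 2) ^ 2) := ⟨_, rfl⟩
  have hN0 : 0 < N := by rw [hN]; positivity
  have hr₁ : 0 ≤ m - e₁ := by linarith
  have hr₂ : 0 ≤ m + α - e₂ := by linarith
  refine ⟨C₂ / (m + α - e₂ + 1) / N, by positivity, C₁ / (m - e₁ + 1) / N, by positivity, ?_⟩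
  intro T hT f w hf hw _ hAC hae
  have L0 := weak_identity hγ hα1 hα2 hm1 hT hf hw hAC (hae.mono fun t h => h.1)
  have L1 := weak_identity hγ hα1 hα2 (by linarith : 1 ≤ m + 1) hT hf hw hAC
    (hae.mono fun t h => h.1)
  rw [show m + 1 + α = m + α + 1 by ring, show m + α + 1 + γ = m + α + γ + 1 by ring,
    Real.Gamma_add_one (s := m + α + 1) (by linarith), Real.Gamma_add_one (s := m + 1) (by linarith),
    Real.Gamma_add_one (s := m + α + γ + 1) (by linarith), mul_div_mul_comm, mul_div_mul_comm,
    ← hc₁, ← hc₀, show m + 1 + 1 = m + 2 by ring, show m + 1 + 2 = m + 3 by ring] at L1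
  rw [← hc₁, ← hc₀] at L0
  have k₁ := continuous_sub_rpow T (by linarith : 0 ≤ m)
  have k₂ := continuous_sub_rpow T (by linarith : 0 ≤ m + 1)
  have k₃ := continuous_sub_rpow T (by linarith : 0 ≤ m + α)
  have k₄ := continuous_sub_rpow T (by linarith : 0 ≤ m + α + 1)
  have k₅ := continuous_sub_rpow T (by linarith : 0 ≤ m + α + γ)
  have k₆ := continuous_sub_rpow T (by linarith : 0 ≤ m + α + γ + 1)
  have k₇ := continuous_sub_rpow T hr₁
  have k₈ := continuous_sub_rpow T hr₂
  have kw := hw.continuous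
  have i₁ : IntervalIntegrable (fun s => w s * (T - s) ^ m) volume 0 T :=
    (kw.mul k₁).intervalIntegrable _ _
  have i₂ : IntervalIntegrable (fun s => w s * (T - s) ^ (m + 1)) volume 0 T :=
    (kw.mul k₂).intervalIntegrable _ _
  have i₃ : IntervalIntegrable (fun s => w s * (T - s) ^ (m + α)) volume 0 T :=
    (kw.mul k₃).intervalIntegrable _ _
  have i₄ : IntervalIntegrable (fun s => w s * (T - s) ^ (m + α + 1)) volume 0 T :=
    (kw.mul k₄).intervalIntegrable _ _
  have i₅ : IntervalIntegrable (fun s => f s * (T - s) ^ (m + α + γ)) volume 0 T :=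
    hf.mul_continuousOn k₅.continuousOn
  have i₆ : IntervalIntegrable (fun s => f s * (T - s) ^ (m + α + γ + 1)) volume 0 T :=
    hf.mul_continuousOn k₆.continuousOn
  have j₁ := (((i₁.const_mul T).sub (i₂.const_mul q)).const_mul c₁)
  have j₂ := (((i₃.const_mul T).sub (i₄.const_mul κ)).const_mul a)
  have j₃ := (((i₅.const_mul T).sub (i₆.const_mul θ)).const_mul c₀)
  have hmono : ∫ s in (0:ℝ)..T, (c₁ * (T * (w s * (T - s) ^ m) - q * (w s * (T - s) ^ (m + 1)))
        + a * (T * (w s * (T - s) ^ (m + α)) - κ * (w s * (T - s) ^ (m + α + 1)))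
        - c₀ * (T * (f s * (T - s) ^ (m + α + γ)) - θ * (f s * (T - s) ^ (m + α + γ + 1)))) ≤
      ∫ s in (0:ℝ)..T, T * (C₁ * (T - s) ^ (m - e₁) + C₂ * (T - s) ^ (m + α - e₂)) := by
    refine intervalIntegral.integral_mono_ae_restrict hT.le ((j₁.add j₂).sub j₃)
      (Continuous.intervalIntegrable (by fun_prop) _ _) ?_
    have hne : ∀ᵐ s ∂(volume.restrict (Set.Icc (0:ℝ) T)), s ≠ T :=
      ae_restrict_of_ae (by simp [ae_iff])
    filter_upwards [hae, hne, ae_restrict_mem measurableSet_Icc] with s hs hsT hsm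
    have hX : 0 < T - s := sub_pos.2 (lt_of_le_of_ne hsm.2 hsT)
    have hXT : T - s ≤ T := by linarith [hsm.1]
    obtain ⟨X, hXdef⟩ : ∃ X, X = T - s := ⟨_, rfl⟩
    rw [← hXdef] at hX hXT ⊢
    have b₁ := mul_weight_le (Q := q) (T := T) (k := q) (y := w s) (r := m) hX (by
      rw [abs_le]
      constructor <;> nlinarith [mul_nonneg (by linarith : 0 ≤ q) (sub_nonneg.2 hXT),
        mul_pos (by linarith : 0 < q) hX,
        mul_nonneg (sub_nonneg.2 hq1) hT.le])
    have b₂ := mul_weight_le (Q := 1) (T := T) (k := κ) (y := w s) (r := m + α) hX (by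
      rw [abs_le]; constructor <;> nlinarith [mul_nonneg hκ0.le (sub_nonneg.2 hXT), mul_pos hκ0 hX,
        mul_nonneg (sub_nonneg.2 hκ1) hT.le])
    have b₃ : b * |w s| ^ p * ((1 - θ) * T * X ^ (m + α + γ)) ≤
        f s * (T * X ^ (m + α + γ) - θ * X ^ (m + α + γ + 1)) := by
      rw [Real.rpow_add_one hX.ne']
      have h0 : 0 ≤ b * |w s| ^ p := by positivity
      have hw0 : 0 ≤ (1 - θ) * T * X ^ (m + α + γ) :=
        mul_nonneg (mul_nonneg (by linarith) hT.le) (Real.rpow_nonneg hX.le _)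
      have hle : (1 - θ) * T * X ^ (m + α + γ) ≤
          T * X ^ (m + α + γ) - θ * (X ^ (m + α + γ) * X) := by
        have : 0 ≤ θ * (T - X) * X ^ (m + α + γ) :=
          mul_nonneg (mul_nonneg hθ0.le (by linarith)) (Real.rpow_nonneg hX.le _)
        linarith
      exact mul_le_mul hs.2 hle hw0 (h0.trans hs.2)
    have y₁ := hY₁ m (α + γ) |w s| X (abs_nonneg _) hX
    have y₂ := hY₂ (m + α) γ |w s| X (abs_nonneg _) hX
    rw [← he₁, ← add_assoc] at y₁
    rw [← he₂] at y₂
    have b₁' := mul_le_mul_of_nonneg_left b₁ hc₁0.le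
    have b₂' := mul_le_mul_of_nonneg_left b₂ ha.le
    have b₃' := mul_le_mul_of_nonneg_left b₃ hc₀0.le
    have y₁' := mul_le_mul_of_nonneg_left y₁ hT.le
    have y₂' := mul_le_mul_of_nonneg_left y₂ hT.le
    linarith
  have hL : ∫ s in (0:ℝ)..T, (c₁ * (T * (w s * (T - s) ^ m) - q * (w s * (T - s) ^ (m + 1)))
        + a * (T * (w s * (T - s) ^ (m + α)) - κ * (w s * (T - s) ^ (m + α + 1)))
        - c₀ * (T * (f s * (T - s) ^ (m + α + γ)) - θ * (f s * (T - s) ^ (m + α + γ + 1)))) =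
      N * (T * deriv w 0 + w 0) * T ^ (m + 2) := by
    rw [intervalIntegral.integral_sub (j₁.add j₂) j₃, intervalIntegral.integral_add j₁ j₂,
      intervalIntegral.integral_const_mul, intervalIntegral.integral_const_mul,
      intervalIntegral.integral_const_mul,
      intervalIntegral.integral_sub (i₁.const_mul T) (i₂.const_mul q),
      intervalIntegral.integral_sub (i₃.const_mul T) (i₄.const_mul κ),
      intervalIntegral.integral_sub (i₅.const_mul T) (i₆.const_mul θ)]
    simp only [intervalIntegral.integral_const_mul]
    generalize (∫ s in (0:ℝ)..T, w s * (T - s) ^ m) = P₀ at L0 L1 ⊢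
    generalize (∫ s in (0:ℝ)..T, w s * (T - s) ^ (m + 1)) = P₁ at L0 L1 ⊢
    generalize (∫ s in (0:ℝ)..T, w s * (T - s) ^ (m + α)) = Q₀ at L0 L1 ⊢
    generalize (∫ s in (0:ℝ)..T, w s * (T - s) ^ (m + α + 1)) = Q₁ at L0 L1 ⊢
    generalize (∫ s in (0:ℝ)..T, f s * (T - s) ^ (m + α + γ)) = F₀ at L0 L1 ⊢
    generalize (∫ s in (0:ℝ)..T, f s * (T - s) ^ (m + α + γ + 1)) = F₁ at L0 L1 ⊢
    have t3 : T ^ (m + 3) = T ^ (m + 1) * T * T := by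
      rw [← Real.rpow_add_one hT.ne', ← Real.rpow_add_one hT.ne']; congr 1; ring
    have t2 : T ^ (m + 2) = T ^ (m + 1) * T := by
      rw [← Real.rpow_add_one hT.ne']; congr 1; ring
    rw [t2] at L0
    rw [t2, t3] at L1
    rw [t2]
    generalize T ^ (m + 1) = S at L0 L1 ⊢
    generalize deriv w 0 = d at L0 L1 ⊢
    generalize w 0 = d₀ at L0 L1 ⊢
    have n1 : m + 1 ≠ 0 := by linarith
    have n2 : m + 2 ≠ 0 := by linarith
    have n3 : m + 3 ≠ 0 := by linarith
    have n4 : m + α + 1 ≠ 0 := by linarith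
    have n5 : m + α + γ + 1 ≠ 0 := by linarith
    have hκq : κ * ((m + α + 1) / (m + 1)) = q := by rw [hκ, hq]; field_simp
    have hκθ : κ * ((m + α + 1) / (m + α + γ + 1)) = θ := by rw [hκ, hθ]; field_simp
    -- The initial data contribute only through `T * d + d₀`: the terms in `d` alone cancel
    -- because of the choice of `q`.
    have hD : c₁ * (T * ((T * d + d₀) * (S / (m + 1)) - d * (S * T / (m + 2)))
        - q * ((T * d + d₀) * (S * T / (m + 2)) - d * (S * T * T / (m + 3)))) =
        N * (T * d + d₀) * (S * T) := by
      rw [hN, hq]; field_simp; ring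
    rw [← hD, ← hκq, ← hκθ]
    linear_combination T * L0 - κ * L1
  rw [hL, intervalIntegral.integral_const_mul, intervalIntegral.integral_add
      ((k₇.intervalIntegrable _ _).const_mul C₁) ((k₈.intervalIntegrable _ _).const_mul C₂),
    intervalIntegral.integral_const_mul, intervalIntegral.integral_const_mul,
    integral_sub_rpow hr₁, integral_sub_rpow hr₂] at hmono
  have x₁ : T * T ^ (m - e₁ + 1) = T ^ (m + 2) * T ^ (-(α + γ) / (p - 1)) := by
    rw [neg_div, ← he₁, ← Real.rpow_one_add' hT.le (by linarith), ← Real.rpow_add hT]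
    congr 1; ring
  have x₂ : T * T ^ (m + α - e₂ + 1) = T ^ (m + 2) * T ^ (α + γ - p * γ / (p - 1)) := by
    rw [show α + γ - p * γ / (p - 1) = α - e₂ by rw [he₂]; field_simp; ring,
      ← Real.rpow_one_add' hT.le (by linarith), ← Real.rpow_add hT]
    congr 1; ring
  have hTm : 0 < N * T ^ (m + 2) := by positivity
  refine le_of_mul_le_mul_left ?_ hTm
  calc N * T ^ (m + 2) * (T * deriv w 0 + w 0) = N * (T * deriv w 0 + w 0) * T ^ (m + 2) := by ring
    _ ≤ _ := hmono
    _ = C₂ / (m + α - e₂ + 1) * (T * T ^ (m + α - e₂ + 1))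
        + C₁ / (m - e₁ + 1) * (T * T ^ (m - e₁ + 1)) := by ring
    _ = _ := by
      rw [x₁, x₂]
      field_simp
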